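/- (Maróti) Let n > 2 and let G be a subgroup of the symmetric group on n points. Then the number of conjugacy classes of G is at most 3^((n−1)/2). -/

import Mathlib

namespace Maroti

noncomputable def r : ℝ := Real.sqrt 3
noncomputable def c : ℝ := (r + 1) / 2
noncomputable def be (d : ℕ) : ℝ := if d = 2 then 2 else r ^ (d - 1)
noncomputable def V (d : ℕ) : ℝ := if d ≤ 2 then 1 else c

lemma r_sq : r ^ 2 = 3 := Real.sq_sqrt (by norm_num)
lemma r_pos : 0 < r := Real.sqrt_pos.mpr (by norm_num)
lemma r_lb : 1.732 ≤ r := by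
  have := r_sq; have := r_pos; nlinarith
lemma r_ub : r ≤ 1.7321 := by
  have := r_sq; have := r_pos; nlinarith
lemma r_one : 1 ≤ r := by linarith [r_lb]

lemma be0 : be 0 = 1 := by simp [be]
lemma be1 : be 1 = 1 := by simp [be]
lemma be2 : be 2 = 2 := by simp [be]
lemma be3 (d : ℕ) (h : 3 ≤ d) : be d = r ^ (d - 1) := by simp [be]; omega
lemma be_add3 (d : ℕ) : be (d + 3) = r ^ d * 3 := by
  rw [be3 _ (by omega), show d + 3 - 1 = d + 2 by omega, pow_add, r_sq]
lemma V1 : V 1 = 1 := by simp [V]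
lemma V2 : V 2 = 1 := by simp [V]
lemma V3 (d : ℕ) (h : 3 ≤ d) : V d = c := by simp [V]; omega
lemma V_add3 (d : ℕ) : V (d + 3) = c := V3 _ (by omega)
lemma c_lb : 1.366 ≤ c := by unfold c; linarith [r_lb]
lemma c_ub : c ≤ 1.36605 := by unfold c; linarith [r_ub]
lemma V_one (d : ℕ) : 1 ≤ V d := by
  unfold V; split_ifs <;> linarith [c_lb]
lemma rp (d : ℕ) : 1 ≤ r ^ d := one_le_pow₀ r_one
lemma be_one (d : ℕ) : 1 ≤ be d := by
  unfold be; split_ifs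
  · norm_num
  · exact rp _

lemma r3 : r ^ 3 = 3 * r := by rw [pow_succ, r_sq]

lemma cases4 (d : ℕ) : d = 0 ∨ d = 1 ∨ d = 2 ∨ ∃ e, d = e + 3 := by
  rcases d with _ | _ | _ | e <;> simp

lemma be_mul (a b : ℕ) : be a * be b ≤ be (a + b) := by
  have l := r_lb
  have u := r_ub
  rcases cases4 a with rfl | rfl | rfl | ⟨a, rfl⟩ <;>
  rcases cases4 b with rfl | rfl | rfl | ⟨b, rfl⟩
  · simp [be0]
  · simp [be0]
  · simp [be0]
  · simp [be0]
  · simp [be0]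
  · norm_num [be1, be2]
  · have := be_add3 0
    norm_num [be1, be2] at *; linarith
  · rw [show 1 + (b + 3) = (b + 1) + 3 by ring, be_add3, be_add3, be1, pow_succ]
    nlinarith [rp b]
  · simp [be0]
  · have := be_add3 0
    norm_num [be1, be2] at *; linarith
  · have := be_add3 1
    norm_num [be1, be2] at *; linarith
  · rw [show 2 + (b + 3) = (b + 2) + 3 by ring, be_add3, be_add3, be2, pow_add, r_sq]
    nlinarith [rp b]
  · simp [be0]
  · rw [show (a + 3) + 1 = (a + 1) + 3 by ring, be_add3, be_add3, be1, pow_succ]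
    nlinarith [rp a]
  · rw [show (a + 3) + 2 = (a + 2) + 3 by ring, be_add3, be_add3, be2, pow_add, r_sq]
    nlinarith [rp a]
  · rw [show (a + 3) + (b + 3) = (a + b + 3) + 3 by ring, be_add3, be_add3, be_add3, pow_add,
      pow_add, r3]
    have : 1 ≤ r ^ a * r ^ b := one_le_mul_of_one_le_of_one_le (rp a) (rp b)
    nlinarith

noncomputable def LP (l : List ℕ) : ℝ := (l.map be).prod
noncomputable def LE (l : List ℕ) : ℝ := (l.map V).sum

lemma LP_nil : LP [] = 1 := rfl
lemma LE_nil : LE [] = 0 := rfl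
lemma LP_cons (d : ℕ) (l : List ℕ) : LP (d :: l) = be d * LP l := by simp [LP]
lemma LE_cons (d : ℕ) (l : List ℕ) : LE (d :: l) = V d + LE l := by simp [LE]
lemma LP_one (l : List ℕ) : 1 ≤ LP l := by
  induction l with
  | nil => simp [LP]
  | cons d l ih => rw [LP_cons]; exact one_le_mul_of_one_le_of_one_le (be_one d) ih
lemma LE_len (l : List ℕ) : (l.length : ℝ) ≤ LE l := by
  induction l with
  | nil => simp [LE]
  | cons d l ih => rw [LE_cons]; push_cast [List.length_cons]; linarith [V_one d]

lemma listA (l : List ℕ) : LP l ≤ be l.sum := by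
  induction l with
  | nil => simp [LP, be0]
  | cons d l ih =>
    rw [LP_cons, List.sum_cons]
    exact (mul_le_mul_of_nonneg_left ih (by linarith [be_one d])).trans (be_mul _ _)

lemma step (d : ℕ) (hd : 1 ≤ d) (S : ℝ) (hS : 2 ≤ S) : be d * (S + V d) ≤ r ^ d * S := by
  have l := r_lb
  have u := c_ub
  rcases cases4 d with rfl | rfl | rfl | ⟨d, rfl⟩
  · omega
  · rw [be1, V1]; nlinarith
  · rw [be2, V2, r_sq]; nlinarith
  · rw [be_add3, V_add3, pow_add, r3, mul_assoc, mul_assoc]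
    apply mul_le_mul_of_nonneg_left _ (by linarith [rp d])
    nlinarith

lemma listB (l : List ℕ) (hl : ∀ d ∈ l, 1 ≤ d) (hne : l ≠ []) :
    LP l * (1 + LE l) ≤ c * r ^ l.sum := by
  induction l with
  | nil => simp at hne
  | cons d l ih =>
    have hd : 1 ≤ d := hl d (by simp)
    by_cases h : l = []
    · subst h
      have hl := r_lb
      have hc : c = (r + 1) / 2 := rfl
      have h2 := r_sq
      rw [LP_cons, LE_cons, LP_nil, LE_nil]
      simp only [List.sum_cons, List.sum_nil, add_zero, mul_one]
      rcases cases4 d with rfl | rfl | rfl | ⟨d, rfl⟩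
      · omega
      · rw [be1, V1, hc]; nlinarith
      · rw [be2, V2, hc]; nlinarith
      · rw [be_add3, V_add3, pow_add, r3, hc]
        have : (r ^ d * 3 * (1 + (r + 1) / 2)) = (r + 1) / 2 * (r ^ d * (3 * r)) := by
          linear_combination (-(3:ℝ)/2 * r ^ d) * h2
        linarith
    · have ih := ih (fun d hd => hl d (by simp [hd])) h
      have h1 : (1:ℝ) ≤ LE l := by
        refine le_trans ?_ (LE_len l)
        have := List.length_pos_iff.mpr h
        exact_mod_cast this
      have st := step d hd (1 + LE l) (by linarith)
      rw [LP_cons, LE_cons, List.sum_cons, pow_add]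
      have hP := LP_one l
      calc be d * LP l * (1 + (V d + LE l)) = LP l * (be d * (1 + LE l + V d)) := by ring
        _ ≤ LP l * (r ^ d * (1 + LE l)) := mul_le_mul_of_nonneg_left st (by linarith)
        _ = r ^ d * (LP l * (1 + LE l)) := by ring
        _ ≤ r ^ d * (c * r ^ l.sum) := mul_le_mul_of_nonneg_left ih (by linarith [rp d])
        _ = _ := by ring

lemma sum_zero_nil (l : List ℕ) (hl : ∀ d ∈ l, 1 ≤ d) (h : l.sum = 0) : l = [] := by
  cases l with
  | nil => rfl
  | cons d l => have := hl d (by simp); simp at h; omega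

lemma sum_one (l : List ℕ) (hl : ∀ d ∈ l, 1 ≤ d) (h : l.sum = 1) : l = [1] := by
  cases l with
  | nil => simp at h
  | cons d l =>
    have := hl d (by simp)
    rw [List.sum_cons] at h
    have h0 := sum_zero_nil l (fun d hd => hl d (by simp [hd])) (by omega)
    subst h0
    simp at h; simp [h]

lemma listB' (l : List ℕ) (hl : ∀ d ∈ l, 1 ≤ d) (hs : 1 ≤ l.sum) :
    LP l * (1 + LE l) ≤ be (l.sum + 1) * V (l.sum + 1) := by
  by_cases h : l.sum = 1
  · have := sum_one l hl h
    subst this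
    norm_num [LP, LE, be1, V1, be2, V2]
  · have hne : l ≠ [] := by rintro rfl; simp at hs
    refine (listB l hl hne).trans ?_
    rw [be3 _ (by omega), V3 _ (by omega), mul_comm]; rfl

lemma listC (l : List ℕ) (hl : ∀ d ∈ l, 1 ≤ d) (hs : 2 ≤ l.sum) :
    be (l.sum - 1) * (LP l * LE l) ≤ be l.sum ^ 2 * V l.sum := by
  have hne : l ≠ [] := by rintro rfl; simp at hs
  have hB := listB l hl hne
  have hP := LP_one l
  have lb := r_lb
  have ub := r_ub
  have cl := c_lb
  have cu := c_ub
  generalize l.sum = D at *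
  have hPE : LP l * LE l ≤ c * r ^ D - 1 := by linarith
  rcases cases4 D with rfl | rfl | rfl | ⟨d, rfl⟩
  · omega
  · omega
  · rw [r_sq] at hPE; norm_num [be1, be2, V2]; linarith
  · rcases d with _ | d
    · have := be_add3 0
      norm_num at *
      rw [be2, this, V3 _ le_rfl]
      rw [r3] at hPE
      nlinarith
    · rw [show d + 1 + 3 - 1 = d + 3 by omega, be_add3, be_add3, V_add3]
      rw [show d + 1 + 3 = d + 4 by ring, pow_add, show r ^ 4 = 9 by
        rw [show (4:ℕ) = 2 * 2 by rfl, pow_mul, r_sq]; norm_num] at hPE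
      have hr := rp d
      calc r ^ d * 3 * (LP l * LE l) ≤ r ^ d * 3 * (c * (r ^ d * 9)) :=
            mul_le_mul_of_nonneg_left (by linarith) (by linarith)
        _ = (r ^ (d + 1) * 3) ^ 2 * c := by
          rw [pow_succ]; linear_combination (-9 * c * (r ^ d) ^ 2) * r_sq

lemma pairD (a b : ℕ) (ha : 1 ≤ a) (hb : 1 ≤ b) :
    1 + be a * be b * (V a + V b) ≤ r ^ (a + b) := by
  have lb := r_lb
  have cu := c_ub
  have rr : r * r = 3 := by have := r_sq; rwa [pow_two] at this
  have key1 : ∀ x : ℝ, 1 ≤ x → 1 + x * 3 * (1 + c) ≤ 9 * x := by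
    intro x hx; nlinarith
  have key2 : ∀ x : ℝ, 1 ≤ x → 1 + 2 * (x * 3) * (1 + c) ≤ 9 * (x * r) := by
    intro x hx; nlinarith
  have key3 : ∀ x : ℝ, 1 ≤ x → 1 + x * 9 * (c + c) ≤ 27 * x := by
    intro x hx; nlinarith
  rcases cases4 a with rfl | rfl | rfl | ⟨a, rfl⟩ <;>
  rcases cases4 b with rfl | rfl | rfl | ⟨b, rfl⟩ <;>
  first
  | omega
  | (rw [pow_add]; simp only [be1, V1, be2, V2, be_add3, V_add3, pow_add, r3, r_sq, pow_one])
  · linarith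
  · linarith
  · have := key1 _ (rp b)
    linear_combination this - 3 * r ^ b * rr
  · linarith
  · norm_num
  · have := key2 _ (rp b)
    linear_combination this
  · have := key1 _ (rp a)
    linear_combination this - 3 * r ^ a * rr
  · have := key2 _ (rp a)
    linear_combination this
  · have := key3 _ (one_le_mul_of_one_le_of_one_le (rp a) (rp b))
    linear_combination this - 9 * r ^ a * r ^ b * rr

lemma listD2 (l : List ℕ) (hl : ∀ d ∈ l, 1 ≤ d) (h2 : 2 ≤ l.length) :
    1 + LP l * LE l ≤ r ^ l.sum := by
  induction l with
  | nil => simp at h2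
  | cons d l ih =>
    have hd : 1 ≤ d := hl d (by simp)
    have hl' : ∀ d ∈ l, 1 ≤ d := fun d hd => hl d (by simp [hd])
    by_cases h : 2 ≤ l.length
    · have ih := ih hl' h
      have h1 : (2:ℝ) ≤ LE l := by
        refine le_trans ?_ (LE_len l)
        exact_mod_cast h
      have st := step d hd (LE l) h1
      rw [LP_cons, LE_cons, List.sum_cons, pow_add]
      have hP := LP_one l
      have hr := rp d
      calc 1 + be d * LP l * (V d + LE l) = 1 + LP l * (be d * (LE l + V d)) := by ring
        _ ≤ 1 + LP l * (r ^ d * LE l) := by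
          linarith [mul_le_mul_of_nonneg_left st (by linarith : 0 ≤ LP l)]
        _ = 1 + r ^ d * (LP l * LE l) := by ring
        _ ≤ 1 + r ^ d * (r ^ l.sum - 1) := by
          linarith [mul_le_mul_of_nonneg_left (by linarith : LP l * LE l ≤ r ^ l.sum - 1)
            (by linarith : 0 ≤ r ^ d)]
        _ ≤ _ := by linarith
    · obtain ⟨b, rfl⟩ : ∃ b, l = [b] := List.length_eq_one_iff.mp (by simp at h2 h ⊢; omega)
      have := pairD d b hd (hl' b (by simp))
      simpa [LP, LE] using this

lemma listD (l : List ℕ) (hl : ∀ d ∈ l, 1 ≤ d) :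
    1 + LP l * LE l ≤ be (l.sum + 1) := by
  by_cases h2 : 2 ≤ l.length
  · have hs : 2 ≤ l.sum := by
      have : ∀ l : List ℕ, (∀ d ∈ l, 1 ≤ d) → l.length ≤ l.sum := by
        intro l; induction l with
        | nil => simp
        | cons d l ih =>
          intro h
          have := ih (fun d hd => h d (by simp [hd]))
          have := h d (by simp)
          simp; omega
      exact h2.trans (this l hl)
    rw [be3 _ (by omega)]
    exact listD2 l hl h2
  · rcases l with _ | ⟨d, l⟩
    · simp [LP, LE, be1]
    · have : l = [] := by
        apply List.length_eq_zero_iff.mp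
        simp at h2 ⊢; exact h2
      subst this
      have hd : 1 ≤ d := hl d (by simp)
      have lb := r_lb
      have cu := c_ub
      simp only [LP, LE, List.map_cons, List.map_nil, List.prod_cons, List.prod_nil,
        List.sum_cons, List.sum_nil, mul_one, add_zero]
      rcases cases4 d with rfl | rfl | rfl | ⟨d, rfl⟩
      · omega
      · norm_num [be1, V1, be2]
      · have := be_add3 0
        norm_num [be2, V2] at *; linarith
      · rw [show d + 3 + 1 = (d + 1) + 3 by ring, be_add3, be_add3, V_add3, pow_succ]
        nlinarith [rp d]

end Maroti
namespace Maroti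
open Equiv Finset

section
variable {Ω : Type*} [Fintype Ω] [DecidableEq Ω]

open scoped Classical in
noncomputable def fs (A : Subgroup (Perm Ω)) : Finset (Perm Ω) := univ.filter (fun g => g ∈ A)
open scoped Classical in
noncomputable def orb (A : Subgroup (Perm Ω)) (w : Ω) : Finset Ω :=
  univ.filter (fun y => ∃ g ∈ A, g w = y)
noncomputable def os (A : Subgroup (Perm Ω)) (w : Ω) : ℕ := (orb A w).card
def st (A : Subgroup (Perm Ω)) (w : Ω) : Subgroup (Perm Ω) :=
  A ⊓ MulAction.stabilizer (Perm Ω) w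
def fx (A : Subgroup (Perm Ω)) (S : Finset Ω) : Subgroup (Perm Ω) :=
  A ⊓ fixingSubgroup (Perm Ω) (S : Set Ω)
noncomputable def Ph (A : Subgroup (Perm Ω)) (S : Finset Ω) : ℝ :=
  ∏ w ∈ S, (be (os A w)) ^ ((1 : ℝ) / (os A w : ℝ))
noncomputable def EE (A : Subgroup (Perm Ω)) (S : Finset Ω) : ℝ :=
  ∑ w ∈ S, V (os A w) / (os A w : ℝ)
def Inv (A : Subgroup (Perm Ω)) (S : Finset Ω) : Prop := ∀ g ∈ A, ∀ w ∈ S, g w ∈ S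

variable {A N : Subgroup (Perm Ω)} {S T O : Finset Ω} {w y : Ω} {g x : Perm Ω}

lemma mem_fs : g ∈ fs A ↔ g ∈ A := by simp [fs]
lemma mem_orb : y ∈ orb A w ↔ ∃ g ∈ A, g w = y := by simp [orb]
lemma mem_st : g ∈ st A w ↔ g ∈ A ∧ g w = w := by
  simp [st, Subgroup.mem_inf, MulAction.mem_stabilizer_iff, Perm.smul_def]
lemma mem_fx : g ∈ fx A S ↔ g ∈ A ∧ ∀ w ∈ S, g w = w := by
  simp [fx, Subgroup.mem_inf, mem_fixingSubgroup_iff, Perm.smul_def]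
lemma fs_pos (A : Subgroup (Perm Ω)) : 0 < (fs A).card :=
  Finset.card_pos.mpr ⟨1, mem_fs.mpr A.one_mem⟩
lemma fs_posR (A : Subgroup (Perm Ω)) : (0:ℝ) < (fs A).card := by exact_mod_cast fs_pos A
lemma self_orb (A : Subgroup (Perm Ω)) (w : Ω) : w ∈ orb A w := mem_orb.mpr ⟨1, A.one_mem, rfl⟩
lemma os_pos (A : Subgroup (Perm Ω)) (w : Ω) : 0 < os A w := Finset.card_pos.mpr ⟨w, self_orb A w⟩
lemma os_posR (A : Subgroup (Perm Ω)) (w : Ω) : (0:ℝ) < os A w := by exact_mod_cast os_pos A w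
lemma orb_inv (A : Subgroup (Perm Ω)) (w : Ω) : Inv A (orb A w) := by
  intro g hg y hy
  obtain ⟨h, hh, rfl⟩ := mem_orb.mp hy
  exact mem_orb.mpr ⟨g * h, A.mul_mem hg hh, rfl⟩
lemma orb_sub (h : Inv A S) (hw : w ∈ S) : orb A w ⊆ S := by
  intro y hy
  obtain ⟨g, hg, rfl⟩ := mem_orb.mp hy
  exact h g hg w hw
lemma orb_symm (h : y ∈ orb A w) : w ∈ orb A y := by
  obtain ⟨g, hg, rfl⟩ := mem_orb.mp h
  exact mem_orb.mpr ⟨g⁻¹, A.inv_mem hg, by simp⟩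
lemma orb_eq (h : y ∈ orb A w) : orb A y = orb A w :=
  subset_antisymm (orb_sub (orb_inv A w) h) (orb_sub (orb_inv A y) (orb_symm h))
lemma os_eq (h : y ∈ orb A w) : os A y = os A w := by unfold os; rw [orb_eq h]
lemma inv_sdiff (hS : Inv A S) (hT : Inv A T) : Inv A (S \ T) := by
  intro g hg w hw
  rw [mem_sdiff] at *
  refine ⟨hS g hg w hw.1, fun h => hw.2 ?_⟩
  simpa using hT g⁻¹ (A.inv_mem hg) _ h
lemma inv_mono (h : N ≤ A) (hS : Inv A S) : Inv N S := fun g hg w hw => hS g (h hg) w hw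
lemma inv_single (h : ∀ g ∈ A, g w = w) : Inv A {w} := by
  intro g hg y hy
  rw [mem_singleton] at *; subst hy; exact h g hg

lemma Ph_empty (A : Subgroup (Perm Ω)) : Ph A ∅ = 1 := by simp [Ph]
lemma Ph_pos (A : Subgroup (Perm Ω)) (S : Finset Ω) : 0 < Ph A S :=
  Finset.prod_pos fun w _ => Real.rpow_pos_of_pos (by linarith [be_one (os A w)]) _
lemma EE_nonneg (A : Subgroup (Perm Ω)) (S : Finset Ω) : 0 ≤ EE A S :=
  Finset.sum_nonneg fun w _ => div_nonneg (by linarith [V_one (os A w)]) (Nat.cast_nonneg _)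
lemma Ph_split (A : Subgroup (Perm Ω)) (h : T ⊆ S) : Ph A S = Ph A T * Ph A (S \ T) := by
  unfold Ph; rw [mul_comm]; exact (Finset.prod_sdiff h).symm
lemma EE_split (A : Subgroup (Perm Ω)) (h : T ⊆ S) : EE A S = EE A T + EE A (S \ T) := by
  unfold EE; rw [add_comm]; exact (Finset.sum_sdiff h).symm
lemma Ph_orb (A : Subgroup (Perm Ω)) (w : Ω) : Ph A (orb A w) = be (os A w) := by
  unfold Ph
  rw [Finset.prod_congr rfl (fun y hy => by rw [os_eq hy]), Finset.prod_const,
    ← Real.rpow_natCast, ← Real.rpow_mul (by linarith [be_one (os A w)])]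
  change _ ^ (1 / (os A w : ℝ) * (os A w : ℝ)) = _
  rw [one_div_mul_cancel (os_posR A w).ne', Real.rpow_one]
lemma EE_orb (A : Subgroup (Perm Ω)) (w : Ω) : EE A (orb A w) = V (os A w) := by
  unfold EE
  rw [Finset.sum_congr rfl (fun y hy => by rw [os_eq hy]), Finset.sum_const, nsmul_eq_mul]
  change (os A w : ℝ) * _ = _
  rw [mul_div_cancel₀ _ (os_posR A w).ne']
lemma os_one (h : ∀ g ∈ A, g w = w) : orb A w = {w} := by
  apply subset_antisymm
  · exact orb_sub (inv_single h) (mem_singleton_self w)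
  · simpa using self_orb A w
lemma Ph_single (h : ∀ g ∈ A, g w = w) : Ph A {w} = 1 := by
  rw [← os_one h, Ph_orb, os, os_one h, card_singleton, be1]

lemma decomp (A : Subgroup (Perm Ω)) (S : Finset Ω) (h : Inv A S) :
    ∃ l : List ℕ, (∀ d ∈ l, 1 ≤ d) ∧ l.sum = S.card ∧ LP l = Ph A S ∧ LE l = EE A S := by
  induction S using Finset.strongInduction with
  | H S ih =>
    rcases S.eq_empty_or_nonempty with rfl | ⟨w, hw⟩
    · exact ⟨[], by simp, by simp, by simp [LP, Ph], by simp [LE, EE]⟩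
    · have hs := orb_sub h hw
      obtain ⟨l, h1, h2, h3, h4⟩ := ih (S \ orb A w)
        (Finset.sdiff_ssubset hs ⟨w, self_orb A w⟩) (inv_sdiff h (orb_inv A w))
      refine ⟨os A w :: l, ?_, ?_, ?_, ?_⟩
      · intro d hd
        rcases List.mem_cons.mp hd with rfl | hd
        · exact os_pos A w
        · exact h1 d hd
      · rw [List.sum_cons, h2, os, add_comm]; exact Finset.card_sdiff_add_card_eq_card hs
      · rw [LP_cons, h3, Ph_split A hs, Ph_orb]
      · rw [LE_cons, h4, EE_split A hs, EE_orb]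

lemma Ph_le (h : Inv A S) : Ph A S ≤ be S.card := by
  obtain ⟨l, _, h2, h3, _⟩ := decomp A S h
  rw [← h3, ← h2]; exact listA l

lemma Ph_mono (hN : N ≤ A) (S : Finset Ω) (h : Inv A S) : Ph N S ≤ Ph A S := by
  induction S using Finset.strongInduction with
  | H S ih =>
    rcases S.eq_empty_or_nonempty with rfl | ⟨w, hw⟩
    · simp [Ph]
    · have hs := orb_sub h hw
      have := ih (S \ orb A w)
        (Finset.sdiff_ssubset hs ⟨w, self_orb A w⟩) (inv_sdiff h (orb_inv A w))
      rw [Ph_split A hs, Ph_split N hs, Ph_orb]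
      exact mul_le_mul (Ph_le (inv_mono hN (orb_inv A w))) this (Ph_pos _ _).le
        (by linarith [be_one (os A w)])

lemma Ph_conj {A A' : Subgroup (Perm Ω)} (x : Perm Ω) (h : ∀ g, g ∈ A' ↔ x⁻¹ * g * x ∈ A)
    (hx : ∀ w, x w ∈ O ↔ w ∈ O) : Ph A' O = Ph A O := by
  have ho : ∀ w, os A' (x w) = os A w := by
    intro w
    unfold os
    have : orb A' (x w) = (orb A w).map x.toEmbedding := by
      ext y
      simp only [mem_orb, Finset.mem_map, Equiv.coe_toEmbedding]
      constructor
      · rintro ⟨g, hg, rfl⟩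
        exact ⟨x⁻¹ (g (x w)), ⟨_, (h g).mp hg, rfl⟩, by simp⟩
      · rintro ⟨_, ⟨g, hg, rfl⟩, rfl⟩
        refine ⟨x * g * x⁻¹, (h _).mpr ?_, by simp⟩
        convert hg using 1; group
    rw [this, card_map]
  unfold Ph
  symm
  apply Finset.prod_bij (fun w _ => x w)
  · intro w hw; exact (hx w).mpr hw
  · intro a _ b _ hab; exact x.injective hab
  · intro b hb; exact ⟨x⁻¹ b, (hx _).mp (by simpa using hb), by simp⟩
  · intro w _; rw [ho]


noncomputable def cm (A : Subgroup (Perm Ω)) (X : Finset (Perm Ω)) : ℕ :=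
  ∑ x ∈ X, ((fs A).filter (fun a => a * x = x * a)).card

open scoped Classical in
noncomputable def co (x : Perm Ω) (A : Subgroup (Perm Ω)) : Finset (Perm Ω) :=
  univ.filter (fun y => x⁻¹ * y ∈ A)

lemma mem_co : g ∈ co x A ↔ x⁻¹ * g ∈ A := by simp [co]

lemma cm_swap (A : Subgroup (Perm Ω)) (X : Finset (Perm Ω)) :
    cm A X = ∑ a ∈ fs A, (X.filter (fun x => a * x = x * a)).card := by
  unfold cm
  simp only [Finset.card_filter]
  exact Finset.sum_comm

lemma cm_coset (A : Subgroup (Perm Ω)) (X : Finset (Perm Ω))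
    (h : ∀ x ∈ X, ∀ y ∈ X, x⁻¹ * y ∈ A) : cm A X ≤ cm A (fs A) := by
  rw [cm_swap, cm_swap]
  apply Finset.sum_le_sum
  intro a ha
  rcases (X.filter (fun x => a * x = x * a)).eq_empty_or_nonempty with he | ⟨x, hx⟩
  · rw [he]; simp
  · rw [mem_filter] at hx
    apply Finset.card_le_card_of_injOn (fun y => x⁻¹ * y)
    · intro y hy
      simp only [coe_filter, Set.mem_ofPred_eq, mem_fs] at hy ⊢
      refine ⟨h x hx.1 y hy.1, ?_⟩
      have h1 : a * x⁻¹ = x⁻¹ * a := by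
        rw [eq_inv_mul_iff_mul_eq, ← mul_assoc, ← hx.2]; group
      rw [← mul_assoc, h1, mul_assoc, hy.2, mul_assoc]
    · intro y _ z _ hyz
      exact mul_left_cancel hyz

lemma card_co (x : Perm Ω) (A : Subgroup (Perm Ω)) : (co x A).card = (fs A).card := by
  apply Finset.card_bij (fun y _ => x⁻¹ * y)
  · intro y hy; exact mem_fs.mpr (mem_co.mp hy)
  · intro y _ z _ hyz; exact mul_left_cancel hyz
  · intro b hb; exact ⟨x * b, mem_co.mpr (by simpa using mem_fs.mp hb), by simp⟩

lemma card_orb (A : Subgroup (Perm Ω)) (w : Ω) :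
    (fs A).card = os A w * (fs (st A w)).card := by
  rw [Finset.card_eq_sum_card_fiberwise (f := fun g : Perm Ω => g w) (t := orb A w)
    (fun g hg => mem_orb.mpr ⟨g, mem_fs.mp hg, rfl⟩)]
  rw [Finset.sum_congr rfl (g := fun _ => (fs (st A w)).card), Finset.sum_const, smul_eq_mul, os]
  intro y hy
  obtain ⟨g, hg, rfl⟩ := mem_orb.mp hy
  rw [← card_co g]
  congr 1
  ext h
  simp only [mem_filter, mem_fs, mem_co, mem_st, Perm.mul_apply, Perm.inv_eq_iff_eq]
  rw [A.mul_mem_cancel_left (A.inv_mem hg)]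

lemma card_stR (A : Subgroup (Perm Ω)) (w : Ω) :
    ((fs (st A w)).card : ℝ) = (fs A).card / os A w := by
  rw [eq_div_iff (os_posR A w).ne', card_orb A w]; push_cast; ring

lemma cm_split (N : Subgroup (Perm Ω)) (t : Ω) (hN : ∀ g ∈ N, g t = t) (X : Finset (Perm Ω))
    (Γ : Finset Ω) (hX : ∀ x ∈ X, x t ∈ Γ) :
    cm N X = ∑ s ∈ Γ, cm (st N s) (X.filter (fun x => x t = s)) := by
  unfold cm
  rw [← Finset.sum_fiberwise_of_maps_to (g := fun x : Perm Ω => x t) (t := Γ) hX]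
  apply Finset.sum_congr rfl
  intro s hs
  apply Finset.sum_congr rfl
  intro x hx
  congr 1
  ext a
  simp only [mem_filter, mem_fs, mem_st] at hx ⊢
  constructor
  · rintro ⟨h1, h2⟩
    refine ⟨⟨h1, ?_⟩, h2⟩
    rw [← hx.2, ← Perm.mul_apply, h2, Perm.mul_apply, hN a h1]
  · rintro ⟨⟨h1, _⟩, h2⟩
    exact ⟨h1, h2⟩

noncomputable def kk (A : Subgroup (Perm Ω)) : ℝ := (cm A (fs A) : ℝ) / (fs A).card

lemma kk_nonneg (A : Subgroup (Perm Ω)) : 0 ≤ kk A := by unfold kk; positivity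
lemma kk_mul (A : Subgroup (Perm Ω)) : kk A * (fs A).card = cm A (fs A) := by
  unfold kk; exact div_mul_cancel₀ _ (fs_posR A).ne'

end
end Maroti
namespace Maroti
open Equiv Finset

section
variable {Ω : Type*} [Fintype Ω] [DecidableEq Ω]

lemma sdiff_single {S : Finset Ω} {a : Ω} (h : a ∉ S) : S \ {a} = S := by
  ext y
  simp only [mem_sdiff, mem_singleton]
  exact ⟨fun hy => hy.1, fun hy => ⟨hy, fun e => h (e ▸ hy)⟩⟩

lemma os_conj {A A' : Subgroup (Perm Ω)} (x : Perm Ω) (h : ∀ g, g ∈ A' ↔ x⁻¹ * g * x ∈ A)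
    (w : Ω) : os A' (x w) = os A w := by
  unfold os
  have : orb A' (x w) = (orb A w).map x.toEmbedding := by
    ext y
    simp only [mem_orb, Finset.mem_map, Equiv.coe_toEmbedding]
    constructor
    · rintro ⟨g, hg, rfl⟩
      exact ⟨x⁻¹ (g (x w)), ⟨_, (h g).mp hg, rfl⟩, by simp⟩
    · rintro ⟨_, ⟨g, hg, rfl⟩, rfl⟩
      refine ⟨x * g * x⁻¹, (h _).mpr ?_, by simp⟩
      convert hg using 1; group
  rw [this, card_map]

lemma key_ineq (N' N : Subgroup (Perm Ω)) (O : Finset Ω) (α γ : Ω)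
    (hO : Inv N' O) (hα : α ∈ O) (hγ : γ ∈ O) (hN : N = st N' α)
    (hD : os N' α = os N' γ) (h2 : 2 ≤ os N' γ) :
    Ph N O * ((if α ∈ orb N' γ then 1 else 0) + EE N (orb N' γ \ {α})) ≤
      V (os N' γ) * Ph N' O := by
  have hNN : N ≤ N' := fun g hg => by rw [hN] at hg; exact (mem_st.mp hg).1
  have hNα : ∀ g ∈ N, g α = α := fun g hg => by rw [hN] at hg; exact (mem_st.mp hg).2
  have hΓ : orb N' γ ⊆ O := orb_sub hO hγ
  have hΓi := orb_inv N' γ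
  have hVp : 1 ≤ V (os N' γ) := V_one _
  have hbp : 1 ≤ be (os N' γ) := be_one _
  have hrest := Ph_mono hNN (O \ orb N' γ) (inv_sdiff hO hΓi)
  by_cases h : α ∈ orb N' γ
  · rw [if_pos h, Ph_split N hΓ, Ph_split N' hΓ, Ph_orb,
      Ph_split N (Finset.singleton_subset_iff.mpr h), Ph_single hNα, one_mul]
    have hSi : Inv N (orb N' γ \ {α}) := inv_sdiff (inv_mono hNN hΓi) (inv_single hNα)
    obtain ⟨l, h1, hs, h3, h4⟩ := decomp N _ hSi
    have hc : l.sum + 1 = os N' γ := by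
      rw [hs]
      have := Finset.card_sdiff_add_card_eq_card (Finset.singleton_subset_iff.mpr h)
      simpa [os] using this
    have hB := listB' l h1 (by omega)
    rw [h3, h4, hc] at hB
    calc _ = (Ph N (orb N' γ \ {α}) * (1 + EE N (orb N' γ \ {α}))) * Ph N (O \ orb N' γ) := by ring
      _ ≤ (be (os N' γ) * V (os N' γ)) * Ph N' (O \ orb N' γ) :=
        mul_le_mul hB hrest (Ph_pos _ _).le (by positivity)
      _ = _ := by ring
  · rw [if_neg h, zero_add, sdiff_single h]
    have hsub : orb N' α ⊆ O \ orb N' γ := by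
      intro y hy
      rw [mem_sdiff]
      refine ⟨orb_sub hO hα hy, fun hy' => h ?_⟩
      rw [← orb_eq hy', orb_eq hy]; exact self_orb _ _
    have h0i := orb_inv N' α
    have hrest2 := Ph_mono hNN ((O \ orb N' γ) \ orb N' α)
      (inv_sdiff (inv_sdiff hO hΓi) h0i)
    rw [Ph_split N hΓ, Ph_split N' hΓ, Ph_orb, Ph_split N hsub, Ph_split N' hsub, Ph_orb, hD]
    have hα0 := self_orb N' α
    have hP0 : Ph N (orb N' α) ≤ be (os N' γ - 1) := by
      rw [Ph_split N (Finset.singleton_subset_iff.mpr hα0), Ph_single hNα, one_mul]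
      refine (Ph_le (inv_sdiff (inv_mono hNN h0i) (inv_single hNα))).trans_eq ?_
      congr 1
      have := Finset.card_sdiff_add_card_eq_card (Finset.singleton_subset_iff.mpr hα0)
      rw [← hD]; simp [os] at *; omega
    obtain ⟨l, h1, hs, h3, h4⟩ := decomp N _ (inv_mono hNN hΓi)
    have hs' : l.sum = os N' γ := hs
    have hC := listC l h1 (by omega)
    rw [h3, h4, hs'] at hC
    have hE := EE_nonneg N (orb N' γ)
    have hPp := Ph_pos N (orb N' γ)
    calc _ = (Ph N (orb N' α) * (Ph N (orb N' γ) * EE N (orb N' γ)))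
            * Ph N ((O \ orb N' γ) \ orb N' α) := by ring
      _ ≤ (be (os N' γ) ^ 2 * V (os N' γ)) * Ph N' ((O \ orb N' γ) \ orb N' α) := by
        refine mul_le_mul (le_trans ?_ hC) hrest2 (Ph_pos _ _).le (by positivity)
        exact mul_le_mul_of_nonneg_right hP0 (by positivity)
      _ = _ := by ring

lemma sum_st (N : Subgroup (Perm Ω)) (S : Finset Ω) :
    ∑ s ∈ S, ((fs (st N s)).card : ℝ) * V (os N s) = (fs N).card * EE N S := by
  unfold EE
  rw [Finset.mul_sum]
  apply Finset.sum_congr rfl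
  intro s _
  rw [card_stR]; ring

lemma cm_mono (A : Subgroup (Perm Ω)) {X Y : Finset (Perm Ω)} (h : X ⊆ Y) : cm A X ≤ cm A Y :=
  Finset.sum_le_sum_of_subset h

lemma st_le (A : Subgroup (Perm Ω)) (w : Ω) : st A w ≤ A := fun _ hg => (mem_st.mp hg).1

lemma cm_monoA {A B : Subgroup (Perm Ω)} (h : A ≤ B) (X : Finset (Perm Ω)) : cm A X ≤ cm B X := by
  apply Finset.sum_le_sum
  intro x _
  apply Finset.card_le_card
  apply Finset.filter_subset_filter
  intro g hg
  exact mem_fs.mpr (h (mem_fs.mp hg))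

lemma chain (H K : Subgroup (Perm Ω)) (O : Finset Ω) (hO : Inv H O) (α : Ω) (hα : α ∈ O)
    (hK : ∀ g ∈ K, ∀ w ∈ O, g w = w) (κ : ℝ) (hκ : 0 ≤ κ)
    (hk : ∀ N : Subgroup (Perm Ω), K ≤ N → N ≤ H → (∀ g ∈ N, g α = α) →
      (cm N (fs N) : ℝ) ≤ (fs N).card * κ * Ph N O)
    (m : ℕ) : ∀ (A : Subgroup (Perm Ω)) (x0 : Perm Ω) (t : Ω), (fs A).card = m →
      K ≤ A → A ≤ H → x0 ∈ H → t ∈ O →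
      (∀ g, (g ∈ A ∧ g t = t) ↔ (x0⁻¹ * g * x0 ∈ A ∧ g α = α)) →
      (cm (st A t) (co x0 A) : ℝ) ≤ (fs (st A t)).card * κ * V (os A t) * Ph A O := by
  induction m using Nat.strong_induction_on with
  | _ m ih =>
  intro A x0 t hm hKA hAH hx0 ht hcond
  set N := st A t with hNdef
  have hNα : ∀ g ∈ N, g α = α := fun g hg => ((hcond g).mp (mem_st.mp hg)).2
  have hKN : K ≤ N := fun g hg => mem_st.mpr ⟨hKA hg, hK g hg t ht⟩
  have hNH : N ≤ H := (st_le A t).trans hAH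
  have hkN := hk N hKN hNH hNα
  have hcocos : ∀ x ∈ co x0 A, ∀ y ∈ co x0 A, x⁻¹ * y ∈ A := by
    intro x hx y hy
    rw [mem_co] at hx hy
    have := A.mul_mem (A.inv_mem hx) hy
    convert this using 1; group
  by_cases hD : os A t = 1
  · have hNA : N = A := by
      apply le_antisymm (st_le A t)
      intro g hg
      refine mem_st.mpr ⟨hg, ?_⟩
      have h1 : g t ∈ orb A t := mem_orb.mpr ⟨g, hg, rfl⟩
      exact Finset.card_le_one.mp (le_of_eq hD) _ h1 _ (self_orb A t)
    rw [hNA] at hkN ⊢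
    rw [hD, V1, mul_one]
    refine le_trans ?_ hkN
    exact_mod_cast cm_coset A _ hcocos
  have hD2 : 2 ≤ os A t := by have := os_pos A t; omega
  have hlt : (fs N).card < m := by
    rw [← hm, card_orb A t]
    have := fs_pos N
    nlinarith
  let N' : Subgroup (Perm Ω) := A.comap (MulAut.conj x0⁻¹).toMonoidHom
  have hN' : ∀ g, g ∈ N' ↔ x0⁻¹ * g * x0 ∈ A := by
    intro g; simp [N', Subgroup.mem_comap]
  have hN'H : N' ≤ H := by
    intro g hg
    have h1 := hAH ((hN' g).mp hg)
    have h2 := H.mul_mem (H.mul_mem hx0 h1) (H.inv_mem hx0)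
    convert h2 using 1; group
  have hNst : N = st N' α := by
    ext g
    rw [mem_st, mem_st, hN']; exact hcond g
  have hx0O : ∀ w, x0 w ∈ O ↔ w ∈ O := by
    intro w
    refine ⟨fun h => ?_, hO x0 hx0 w⟩
    simpa using hO x0⁻¹ (H.inv_mem hx0) _ h
  have hosc := os_conj x0 hN' t
  have hcardN' : (fs N').card = (fs A).card := by
    apply Finset.card_bij (fun g _ => x0⁻¹ * g * x0)
    · intro g hg; exact mem_fs.mpr ((hN' g).mp (mem_fs.mp hg))
    · intro g _ h _ hgh; simpa using hgh
    · intro b hb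
      refine ⟨x0 * b * x0⁻¹, mem_fs.mpr ((hN' _).mpr ?_), by group⟩
      convert mem_fs.mp hb using 1; group
  have hosα : os N' α = os A t := by
    have h1 := card_orb N' α
    rw [← hNst, hcardN', card_orb A t] at h1
    exact (Nat.eq_of_mul_eq_mul_right (fs_pos N) h1).symm
  have hNN' : N ≤ N' := by rw [hNst]; exact st_le _ _
  have hOt := (hx0O t).mpr ht
  have hkey := key_ineq N' N O α (x0 t) (inv_mono hN'H hO) hα hOt hNst
    (by rw [hosα, hosc]) (by rw [hosc]; exact hD2)
  rw [hosc, Ph_conj x0 hN' hx0O] at hkey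
  set Γ := orb N' (x0 t) with hΓ
  have hΓO : Γ ⊆ O := orb_sub (inv_mono hN'H hO) hOt
  have hmaps : ∀ x ∈ co x0 A, x t ∈ Γ := by
    intro x hx
    rw [mem_co] at hx
    refine mem_orb.mpr ⟨x * x0⁻¹, (hN' _).mpr ?_, by simp⟩
    convert hx using 1; group
  have hsplit := cm_split N t (fun g hg => (mem_st.mp hg).2) (co x0 A) Γ hmaps
  -- bound for general s
  have hb1 : ∀ s ∈ Γ, s ≠ α → (cm (st N s) ((co x0 A).filter (fun x => x t = s)) : ℝ) ≤
      (fs (st N s)).card * κ * V (os N s) * Ph N O := by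
    intro s hs _
    rcases ((co x0 A).filter (fun x => x t = s)).eq_empty_or_nonempty with he | ⟨x1, hx1⟩
    · rw [he]
      have := V_one (os N s)
      have := Ph_pos N O
      simp only [cm, Finset.sum_empty, Nat.cast_zero]
      positivity
    · rw [mem_filter] at hx1
      have hx1A := mem_co.mp hx1.1
      have hx1H : x1 ∈ H := by
        have := H.mul_mem hx0 (hAH hx1A)
        convert this using 1; group
      have hsub : (co x0 A).filter (fun x => x t = s) ⊆ co x1 N := by
        intro x hx
        rw [mem_filter] at hx
        rw [mem_co, hNdef, mem_st]
        refine ⟨hcocos x1 hx1.1 x hx.1, ?_⟩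
        rw [Perm.mul_apply, hx.2, ← hx1.2]; simp
      have hconj : ∀ g, x1⁻¹ * g * x1 ∈ A ↔ x0⁻¹ * g * x0 ∈ A := by
        intro g
        constructor
        · intro h
          have := A.mul_mem (A.mul_mem hx1A h) (A.inv_mem hx1A)
          convert this using 1; group
        · intro h
          have := A.mul_mem (A.mul_mem (A.inv_mem hx1A) h) hx1A
          convert this using 1; group
      have hfix : ∀ g : Perm Ω, (x1⁻¹ * g * x1) t = t ↔ g s = s := by
        intro g
        rw [Perm.mul_apply, Perm.mul_apply, hx1.2, Perm.inv_eq_iff_eq, hx1.2]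
      have := ih _ hlt N x1 s rfl hKN hNH hx1H (hΓO hs) (by
        intro g
        rw [hNdef, mem_st, mem_st, hconj, hfix, hcond g]
        tauto)
      refine le_trans ?_ this
      exact_mod_cast cm_mono _ hsub
  have hb2 : (cm (st N α) ((co x0 A).filter (fun x => x t = α)) : ℝ) ≤
      (fs N).card * κ * Ph N O := by
    refine le_trans ?_ hkN
    have h1 := cm_monoA (st_le N α) ((co x0 A).filter (fun x => x t = α))
    have h2 := cm_coset N ((co x0 A).filter (fun x => x t = α)) (by
      intro x hx y hy
      rw [mem_filter] at hx hy
      rw [hNdef, mem_st]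
      refine ⟨hcocos x hx.1 y hy.1, ?_⟩
      rw [Perm.mul_apply, hy.2, ← hx.2]; simp)
    exact_mod_cast h1.trans h2
  have hsum : ∑ s ∈ Γ \ {α}, (cm (st N s) ((co x0 A).filter (fun x => x t = s)) : ℝ) ≤
      (fs N).card * κ * Ph N O * EE N (Γ \ {α}) := by
    calc _ ≤ ∑ s ∈ Γ \ {α}, (κ * Ph N O) * ((fs (st N s)).card * V (os N s)) := by
          apply Finset.sum_le_sum
          intro s hs
          rw [mem_sdiff, mem_singleton] at hs
          refine (hb1 s hs.1 hs.2).trans_eq (by ring)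
      _ = _ := by rw [← Finset.mul_sum, sum_st]; ring
  have htot : (cm N (co x0 A) : ℝ) ≤ (fs N).card * κ *
      (Ph N O * ((if α ∈ Γ then 1 else 0) + EE N (Γ \ {α}))) := by
    rw [hsplit]
    push_cast
    by_cases h : α ∈ Γ
    · rw [← Finset.sum_sdiff (Finset.singleton_subset_iff.mpr h), Finset.sum_singleton, if_pos h]
      refine (add_le_add hsum hb2).trans_eq (by ring)
    · rw [sdiff_single h] at hsum ⊢
      rw [if_neg h]
      refine hsum.trans_eq (by ring)
  refine htot.trans ?_
  calc _ ≤ (fs N).card * κ * (V (os A t) * Ph A O) :=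
        mul_le_mul_of_nonneg_left hkey (by positivity)
    _ = _ := by ring

end
end Maroti
namespace Maroti
open Equiv Finset

section
variable {Ω : Type*} [Fintype Ω] [DecidableEq Ω]

lemma cm_sub (H K : Subgroup (Perm Ω)) (hKH : K ≤ H) :
    (fs K).card * cm K (fs H) ≤ (fs H).card * cm K (fs K) := by
  have h1 : ∑ y ∈ fs H, cm K (co y K) = (fs K).card * cm K (fs H) := by
    unfold cm
    rw [Finset.mul_sum]
    rw [Finset.sum_comm' (t' := fs H) (s' := fun x => (fs H).filter (fun y => y ∈ co x K))]
    · apply Finset.sum_congr rfl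
      intro x hx
      rw [Finset.sum_const, smul_eq_mul]
      congr 1
      rw [← card_co x K]
      congr 1
      ext y
      rw [mem_filter, mem_fs, mem_co]
      refine ⟨fun h => h.2, fun h => ⟨?_, h⟩⟩
      have := H.mul_mem (mem_fs.mp hx) (hKH h)
      convert this using 1; group
    · intro y x
      simp only [mem_filter, mem_fs, mem_co]
      constructor
      · rintro ⟨h1, h2⟩
        have h3 := H.mul_mem h1 (hKH h2)
        refine ⟨⟨h1, ?_⟩, ?_⟩
        · have := K.inv_mem h2
          convert this using 1; group
        · convert h3 using 1; group
      · rintro ⟨⟨h1, h2⟩, h3⟩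
        refine ⟨h1, ?_⟩
        have := K.inv_mem h2
        convert this using 1; group
  rw [← h1, ← smul_eq_mul, ← Finset.sum_const]
  apply Finset.sum_le_sum
  intro y _
  apply cm_coset
  intro a ha b hb
  rw [mem_co] at ha hb
  have := K.mul_mem (K.inv_mem ha) hb
  convert this using 1; group

lemma sum_st_orb (C : Subgroup (Perm Ω)) (w : Ω) :
    ∑ y ∈ orb C w, (fs (st C y)).card = (fs C).card := by
  rw [card_orb C w, os, ← smul_eq_mul, ← Finset.sum_const]
  apply Finset.sum_congr rfl
  intro y hy
  have h1 := card_orb C y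
  rw [os_eq hy, card_orb C w] at h1
  exact (Nat.eq_of_mul_eq_mul_left (os_pos C w) h1).symm

lemma moved_bound (H : Subgroup (Perm Ω)) (O : Finset Ω) (hO : Inv H O) (x : Perm Ω)
    (w : Ω) (hw : w ∈ O) (hxw : x w ≠ w) :
    ((fs H).filter (fun a => a * x = x * a)).card ≤
      ∑ y ∈ O.filter (fun y => x y ≠ y), ((fs (st H y)).filter (fun a => a * x = x * a)).card := by
  let C : Subgroup (Perm Ω) := H ⊓ Subgroup.centralizer {x}
  have hC : ∀ g, g ∈ C ↔ g ∈ H ∧ g * x = x * g := by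
    intro g
    simp only [C, Subgroup.mem_inf, Subgroup.mem_centralizer_singleton_iff]
  have h1 : (fs H).filter (fun a => a * x = x * a) = fs C := by
    ext g; simp only [mem_filter, mem_fs, hC]
  have h2 : ∀ y, (fs (st H y)).filter (fun a => a * x = x * a) = fs (st C y) := by
    intro y; ext g; simp only [mem_filter, mem_fs, mem_st, hC]; tauto
  rw [h1, ← sum_st_orb C w]
  simp only [h2]
  apply Finset.sum_le_sum_of_subset
  intro y hy
  obtain ⟨g, hg, rfl⟩ := mem_orb.mp hy
  rw [hC] at hg
  rw [mem_filter]
  refine ⟨hO g hg.1 w hw, fun h => hxw ?_⟩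
  rw [← Perm.mul_apply, ← hg.2, Perm.mul_apply] at h
  exact g.injective h

lemma trans_case (H : Subgroup (Perm Ω)) (α : Ω) (O : Finset Ω) (hOα : orb H α = O)
    (hk : ∀ N : Subgroup (Perm Ω), N ≤ H → ∀ w ∈ O, fx H O ≤ N → (∀ g ∈ N, g w = w) →
      kk N ≤ kk (fx H O) * Ph N O) :
    kk H ≤ kk (fx H O) * Ph H O := by
  set K := fx H O with hKdef
  have hKH : K ≤ H := fun g hg => (mem_fx.mp hg).1
  have hO : Inv H O := hOα ▸ orb_inv H α
  have hκ := kk_nonneg K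
  have horb : ∀ w ∈ O, orb H w = O := fun w hw => by
    rw [← hOα]; exact orb_eq (hOα ▸ hw)
  have hos : ∀ w ∈ O, os H w = O.card := fun w hw => by rw [os, horb w hw]
  have hPh : Ph H O = be O.card := by rw [← hOα, Ph_orb]; rfl
  -- per-point bound
  have hpt : ∀ w ∈ O, (cm (st H w) ((fs H).filter (fun x => x w ≠ w)) : ℝ) ≤
      (fs (st H w)).card * (kk K * (be O.card - 1)) := by
    intro w hw
    set N := st H w with hN
    have hNH : N ≤ H := st_le H w
    have hNw : ∀ g ∈ N, g w = w := fun g hg => (mem_st.mp hg).2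
    have hKN : K ≤ N := fun g hg => mem_st.mpr ⟨hKH hg, (mem_fx.mp hg).2 w hw⟩
    have hch := chain H K O hO w hw (fun g hg => (mem_fx.mp hg).2) (kk K) hκ (by
      intro N hKN hNH hNw
      have := hk N hNH w hw hKN hNw
      rw [← kk_mul]
      have h2 := mul_le_mul_of_nonneg_right this (fs_posR N).le
      linarith) (fs N).card N
    have hsplit := cm_split N w hNw ((fs H).filter (fun x => x w ≠ w)) (O \ {w}) (by
      intro x hx
      rw [mem_filter, mem_fs] at hx
      rw [mem_sdiff, mem_singleton]
      exact ⟨hO x hx.1 w hw, hx.2⟩)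
    have hs1 : (cm N ((fs H).filter (fun x => x w ≠ w)) : ℝ) ≤
        ∑ s ∈ O \ {w}, (kk K * Ph N O) * ((fs (st N s)).card * V (os N s)) := by
      rw [hsplit]
      push_cast
      apply Finset.sum_le_sum
      intro s hs
      rw [mem_sdiff, mem_singleton] at hs
      have hsO : s ∈ orb H w := by rw [horb w hw]; exact hs.1
      obtain ⟨x1, hx1, rfl⟩ := mem_orb.mp hsO
      have h1 := hch x1 (x1 w) rfl hKN hNH hx1 hs.1 (by
        intro g
        rw [hN, mem_st, mem_st, H.mul_mem_cancel_right hx1, H.mul_mem_cancel_left (H.inv_mem hx1),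
          Perm.mul_apply, Perm.mul_apply, Perm.inv_eq_iff_eq]
        tauto)
      refine le_trans ?_ (h1.trans_eq (by ring))
      have hsub : ((fs H).filter (fun x => x w ≠ w)).filter (fun x => x w = x1 w) ⊆ co x1 N := by
        intro x hx
        rw [mem_filter, mem_filter, mem_fs] at hx
        rw [mem_co, hN, mem_st]
        exact ⟨H.mul_mem (H.inv_mem hx1) hx.1.1, by rw [Perm.mul_apply, hx.2]; simp⟩
      exact_mod_cast cm_mono _ hsub
    rw [← Finset.mul_sum, sum_st] at hs1
    have hw1 : {w} ⊆ O := Finset.singleton_subset_iff.mpr hw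
    rw [Ph_split N hw1, Ph_single hNw, one_mul] at hs1
    obtain ⟨l, h1, h2, h3, h4⟩ := decomp N (O \ {w})
      (inv_sdiff (inv_mono hNH hO) (inv_single hNw))
    have hD := listD l h1
    have hc : l.sum + 1 = O.card := by
      rw [h2]; simpa using Finset.card_sdiff_add_card_eq_card hw1
    rw [h3, h4, hc] at hD
    calc _ ≤ _ := hs1
      _ = ((fs N).card * kk K) * (Ph N (O \ {w}) * EE N (O \ {w})) := by ring
      _ ≤ ((fs N).card * kk K) * (be O.card - 1) :=
        mul_le_mul_of_nonneg_left (by linarith) (by positivity)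
      _ = _ := by ring
  -- moved part
  have hmoved : ∑ x ∈ fs H \ fs K, ((fs H).filter (fun a => a * x = x * a)).card ≤
      ∑ w ∈ O, cm (st H w) ((fs H).filter (fun x => x w ≠ w)) := by
    calc _ ≤ ∑ x ∈ fs H \ fs K, ∑ y ∈ O.filter (fun y => x y ≠ y),
            ((fs (st H y)).filter (fun a => a * x = x * a)).card := by
          apply Finset.sum_le_sum
          intro x hx
          rw [mem_sdiff, mem_fs, mem_fs, hKdef, mem_fx] at hx
          have : ∃ w ∈ O, x w ≠ w := by
            by_contra hcon
            push Not at hcon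
            exact hx.2 ⟨hx.1, hcon⟩
          obtain ⟨w, hw, hxw⟩ := this
          exact moved_bound H O hO x w hw hxw
      _ ≤ ∑ x ∈ fs H, ∑ y ∈ O.filter (fun y => x y ≠ y),
            ((fs (st H y)).filter (fun a => a * x = x * a)).card :=
          Finset.sum_le_sum_of_subset Finset.sdiff_subset
      _ = _ := by
          unfold cm
          apply Finset.sum_comm'
          intro x y
          simp only [mem_filter]
          tauto
  have hfsK : fs K ⊆ fs H := fun g hg => mem_fs.mpr (hKH (mem_fs.mp hg))
  have hfixed : ((∑ x ∈ fs K, ((fs H).filter (fun a => a * x = x * a)).card : ℕ) : ℝ) ≤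
      (fs H).card * kk K := by
    have h1 : ∑ x ∈ fs K, ((fs H).filter (fun a => a * x = x * a)).card = cm K (fs H) := by
      rw [cm_swap]
      apply Finset.sum_congr rfl
      intro x _
      congr 1
      ext a
      simp only [mem_filter, eq_comm]
    rw [h1]
    have h2 : ((fs K).card : ℝ) * cm K (fs H) ≤ (fs H).card * cm K (fs K) := by
      exact_mod_cast cm_sub H K hKH
    rw [← kk_mul] at h2
    have h3 := fs_posR K
    refine le_of_mul_le_mul_left ?_ h3
    linarith
  have htot : (cm H (fs H) : ℝ) ≤ (fs H).card * (kk K * be O.card) := by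
    have h1 : cm H (fs H) = ∑ x ∈ fs H \ fs K, ((fs H).filter (fun a => a * x = x * a)).card +
        ∑ x ∈ fs K, ((fs H).filter (fun a => a * x = x * a)).card := by
      unfold cm; rw [Finset.sum_sdiff hfsK]
    have h2 : ((∑ x ∈ fs H \ fs K, ((fs H).filter (fun a => a * x = x * a)).card : ℕ) : ℝ) ≤
        (fs H).card * (kk K * (be O.card - 1)) := by
      refine le_trans (Nat.cast_le.mpr hmoved) ?_
      push_cast
      refine le_trans (Finset.sum_le_sum hpt) ?_
      rw [← Finset.sum_mul]
      apply le_of_eq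
      congr 1
      have := sum_st_orb H α
      rw [hOα] at this
      exact_mod_cast this
    rw [h1, Nat.cast_add]
    linarith
  rw [hPh]
  unfold kk at htot ⊢
  rw [div_le_iff₀ (fs_posR H)]
  linarith

lemma main_ind (m : ℕ) : ∀ (H : Subgroup (Perm Ω)) (D : Finset Ω), D.card = m → Inv H D →
    kk H ≤ kk (fx H D) * Ph H D := by
  induction m using Nat.strong_induction_on with
  | _ m ih =>
  intro H D hm hD
  rcases D.eq_empty_or_nonempty with rfl | ⟨α, hα⟩
  · have : fx H ∅ = H := by ext g; simp [mem_fx]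
    rw [this, Ph_empty, mul_one]
  have hsub := orb_sub hD hα
  by_cases hO : orb H α = D
  · apply trans_case H α D hO
    intro N hNH w hw hKN hNw
    have hw1 : {w} ⊆ D := Finset.singleton_subset_iff.mpr hw
    have hc := Finset.card_sdiff_add_card_eq_card hw1
    rw [card_singleton] at hc
    have h := ih (D \ {w}).card (by omega) N (D \ {w}) rfl
      (inv_sdiff (inv_mono hNH hD) (inv_single hNw))
    have hfx : fx N (D \ {w}) = fx H D := by
      ext g
      rw [mem_fx, mem_fx]
      constructor
      · rintro ⟨h1, h2⟩
        refine ⟨hNH h1, fun y hy => ?_⟩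
        by_cases hyw : y = w
        · rw [hyw]; exact hNw g h1
        · exact h2 y (by rw [mem_sdiff, mem_singleton]; exact ⟨hy, hyw⟩)
      · rintro ⟨h1, h2⟩
        exact ⟨hKN (mem_fx.mpr ⟨h1, h2⟩), fun y hy => h2 y (mem_sdiff.mp hy).1⟩
    rw [hfx] at h
    rwa [Ph_split N hw1, Ph_single hNw, one_mul]
  · have hss : orb H α ⊂ D := lt_of_le_of_ne hsub hO
    have hc := Finset.card_lt_card hss
    have hc2 := Finset.card_sdiff_add_card_eq_card hsub
    have hp : 0 < (orb H α).card := os_pos H α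
    have h1 := ih (orb H α).card (by omega) H _ rfl (orb_inv H α)
    have hle : fx H (orb H α) ≤ H := fun g hg => (mem_fx.mp hg).1
    have hi := inv_sdiff hD (orb_inv H α)
    have h2 := ih (D \ orb H α).card (by omega) (fx H (orb H α)) _ rfl (inv_mono hle hi)
    have hfx : fx (fx H (orb H α)) (D \ orb H α) = fx H D := by
      ext g
      rw [mem_fx, mem_fx, mem_fx]
      constructor
      · rintro ⟨⟨h1, h2⟩, h3⟩
        refine ⟨h1, fun y hy => ?_⟩
        by_cases hyw : y ∈ orb H α
        · exact h2 y hyw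
        · exact h3 y (by rw [mem_sdiff]; exact ⟨hy, hyw⟩)
      · rintro ⟨h1, h2⟩
        exact ⟨⟨h1, fun y hy => h2 y (hsub hy)⟩, fun y hy => h2 y (mem_sdiff.mp hy).1⟩
    rw [hfx] at h2
    have h3 := Ph_mono hle _ hi
    rw [Ph_split H hsub]
    calc kk H ≤ _ := h1
      _ ≤ (kk (fx H D) * Ph H (D \ orb H α)) * Ph H (orb H α) := by
        refine mul_le_mul_of_nonneg_right (h2.trans ?_) (Ph_pos _ _).le
        exact mul_le_mul_of_nonneg_left h3 (kk_nonneg _)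
      _ = _ := by ring

lemma kk_bound (H : Subgroup (Perm Ω)) : kk H ≤ be (Fintype.card Ω) := by
  have h := main_ind _ H univ rfl (fun _ _ _ _ => mem_univ _)
  have h1 : fs (fx H univ) = {1} := by
    ext g
    rw [mem_fs, mem_fx, mem_singleton]
    constructor
    · rintro ⟨_, h⟩; ext w; exact h w (mem_univ w)
    · rintro rfl; exact ⟨H.one_mem, fun _ _ => rfl⟩
  have h2 : kk (fx H univ) = 1 := by
    unfold kk cm; rw [h1]; simp [Finset.filter_singleton]
  rw [h2, one_mul] at h
  exact h.trans (Ph_le (fun _ _ _ _ => mem_univ _))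

lemma card_conj (H : Subgroup (Perm Ω)) : (Nat.card (ConjClasses H) : ℝ) = kk H := by
  unfold kk
  rw [eq_div_iff (fs_posR H).ne']
  have h := card_comm_eq_card_conjClasses_mul_card H
  have hH : Nat.card H = (fs H).card := by
    exact Nat.subtype_card (fs H) (fun g => mem_fs)
  have hc : Nat.card {p : H × H // Commute p.1 p.2} = cm H (fs H) := by
    have e : {p : H × H // Commute p.1 p.2} ≃
        {q : Perm Ω × Perm Ω // (q.1 ∈ H ∧ q.2 ∈ H) ∧ q.1 * q.2 = q.2 * q.1} :=
      { toFun := fun p => ⟨(p.1.1.1, p.1.2.1), ⟨p.1.1.2, p.1.2.2⟩, congrArg Subtype.val p.2⟩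
        invFun := fun q => ⟨(⟨q.1.1, q.2.1.1⟩, ⟨q.1.2, q.2.1.2⟩), Subtype.ext q.2.2⟩
        left_inv := fun p => rfl
        right_inv := fun q => rfl }
    rw [Nat.card_congr e, Nat.subtype_card
      ((fs H ×ˢ fs H).filter (fun q => q.1 * q.2 = q.2 * q.1))
      (fun q => by simp only [mem_filter, mem_product, mem_fs])]
    unfold cm
    simp only [Finset.card_filter]
    rw [Finset.sum_product_right]
  rw [hH, hc] at h
  exact_mod_cast h.symm

end
end Maroti

theorem maroti_conjugacy_class_bound (n : ℕ) (hn : 2 < n)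
    (G : Subgroup (Equiv.Perm (Fin n))) :
    (Nat.card (ConjClasses G) : ℝ) ≤ (3 : ℝ) ^ (((n : ℝ) - 1) / 2) := by
  rw [Maroti.card_conj]
  refine (Maroti.kk_bound G).trans_eq ?_
  rw [Fintype.card_fin, Maroti.be3 n hn, Maroti.r, Real.sqrt_eq_rpow, ← Real.rpow_natCast,
    ← Real.rpow_mul (by norm_num), Nat.cast_sub (by omega)]
  congr 1
  push_cast; ring
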